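/- arXiv:1111.0352 — 6 statements merged into one kernel-verified Lean document; each statement's English description precedes it below -/
import Mathlib

section
/- Let x_1, …, x_n ∈ ℝ^d and λ ≥ 0. Let P = {ℓ_1, …, ℓ_k} be a partition of {1,…,n} into k nonempty clusters with centroids μ_c = (1/|ℓ_c|) ∑_{i ∈ ℓ_c} x_i, and define the DP-means objective F(P) = ∑_{c=1}^k ∑_{i ∈ ℓ_c} ‖x_i − μ_c‖² + λ k. Define a new assignment z′ as follows: for each i, if min_{1 ≤ c ≤ k} ‖x_i − μ_c‖² ≤ λ then z′(i) is a minimizing index c; otherwise x_i is placed in its own new singleton cluster. Let P′ be the resulting partition of {1,…,n} (the nonempty fibers of z′ over {1,…,k} together with the new singletons). Then F(P′) ≤ F(P). (This is the monotonicity claim of Theorem 3.1: one DP-means iteration does not increase the objective in equation (1).) -/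
/-!
Let the cluster centers vary independently of the assignment. Reassigning the points with the
centers held fixed does not increase the resulting energy: each point that stays among the old
clusters moves no farther from its center, and each new singleton trades a cost of at least `λ` for
`0`, which pays for the one cluster it adds. Replacing the centers by the centroids of the new
clusters does not increase it either, since the centroid minimizes the sum of squared distances.
-/

open Finset

/-- The DP-means objective of the clustering given by the fibers of the
assignment map `w : Fin n → β` (only nonempty fibers, i.e. labels in the image
of `w`, count as clusters): the k-means cost with recomputed centroids plus
`λ` times the number of (nonempty) clusters. -/
noncomputable def dpMeansObjective {d n : ℕ} {β : Type} [Fintype β] [DecidableEq β]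
    (x : Fin n → EuclideanSpace ℝ (Fin d)) (lam : ℝ) (w : Fin n → β) : ℝ :=
  ∑ b ∈ Finset.univ.image w,
      ∑ i ∈ Finset.univ.filter (fun i => w i = b),
        ‖x i - ((Finset.univ.filter (fun i => w i = b)).card : ℝ)⁻¹ •
            ∑ j ∈ Finset.univ.filter (fun j => w j = b), x j‖ ^ 2
    + lam * ((Finset.univ.image w).card : ℝ)

section Mean

variable {ι E : Type*}

theorem sum_sub_mean_eq_zero (𝕜 : Type*) [DivisionRing 𝕜] [CharZero 𝕜] [AddCommGroup E]
    [Module 𝕜 E] (s : Finset ι) (x : ι → E) :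
    ∑ i ∈ s, (x i - (#s : 𝕜)⁻¹ • ∑ j ∈ s, x j) = 0 := by
  rcases s.eq_empty_or_nonempty with rfl | hs
  · exact sum_empty
  · have hcard : (#s : 𝕜) ≠ 0 := Nat.cast_ne_zero.mpr hs.card_ne_zero
    rw [sum_sub_distrib, sum_const, ← Nat.cast_smul_eq_nsmul 𝕜, smul_inv_smul₀ hcard, sub_self]

variable [SeminormedAddCommGroup E] [InnerProductSpace ℝ E]

theorem sum_norm_sub_sq_eq_of_sum_sub_eq_zero {s : Finset ι} {x : ι → E} {m : E}
    (hm : ∑ i ∈ s, (x i - m) = 0) (a : E) :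
    ∑ i ∈ s, ‖x i - a‖ ^ 2 = ∑ i ∈ s, ‖x i - m‖ ^ 2 + #s * ‖m - a‖ ^ 2 := by
  have hcross : ∑ i ∈ s, inner ℝ (x i - m) (m - a) = 0 := by
    rw [← sum_inner, hm, inner_zero_left]
  calc ∑ i ∈ s, ‖x i - a‖ ^ 2
      = ∑ i ∈ s, (‖x i - m‖ ^ 2 + 2 * inner ℝ (x i - m) (m - a) + ‖m - a‖ ^ 2) :=
        sum_congr rfl fun i _ => by rw [← norm_add_sq_real, sub_add_sub_cancel]
    _ = ∑ i ∈ s, ‖x i - m‖ ^ 2 + #s * ‖m - a‖ ^ 2 := by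
        rw [sum_add_distrib, sum_add_distrib, ← mul_sum, hcross, mul_zero, add_zero, sum_const,
          nsmul_eq_mul]

theorem sum_norm_sub_mean_sq_le (s : Finset ι) (x : ι → E) (a : E) :
    ∑ i ∈ s, ‖x i - (#s : ℝ)⁻¹ • ∑ j ∈ s, x j‖ ^ 2 ≤ ∑ i ∈ s, ‖x i - a‖ ^ 2 := by
  rw [sum_norm_sub_sq_eq_of_sum_sub_eq_zero (sum_sub_mean_eq_zero ℝ s x) a]
  exact le_add_of_nonneg_right (by positivity)

end Mean

section Energy

variable {ι κ E : Type*} [Fintype ι] [DecidableEq κ]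

/-- The centroid of the cluster with label `b` under the assignment `w`; it is `0` when no point
carries the label `b`. -/
noncomputable def clusterCentroid [AddCommGroup E] [Module ℝ E] (x : ι → E) (w : ι → κ) (b : κ) :
    E :=
  (#{i | w i = b} : ℝ)⁻¹ • ∑ i with w i = b, x i

variable [SeminormedAddCommGroup E]

/-- The DP-means objective with the cluster centers `ν` left free instead of being the centroids.
As in `dpMeansObjective`, only the labels attained by `w` are penalized. -/
noncomputable def dpMeansEnergy (x : ι → E) (lam : ℝ) (w : ι → κ) (ν : κ → E) : ℝ :=
  ∑ i, ‖x i - ν (w i)‖ ^ 2 + lam * #(univ.image w)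

theorem dpMeansEnergy_eq_sum_image (x : ι → E) (lam : ℝ) (w : ι → κ) (ν : κ → E) :
    dpMeansEnergy x lam w ν =
      ∑ b ∈ univ.image w, ∑ i with w i = b, ‖x i - ν b‖ ^ 2 + lam * #(univ.image w) := by
  rw [dpMeansEnergy, ← sum_fiberwise_of_maps_to fun i hi => mem_image_of_mem w hi]
  congr! 3 with b _ i hi
  rw [(mem_filter.mp hi).2]

theorem dpMeansEnergy_clusterCentroid_le [InnerProductSpace ℝ E] (x : ι → E) (lam : ℝ) (w : ι → κ)
    (ν : κ → E) :
    dpMeansEnergy x lam w (clusterCentroid x w) ≤ dpMeansEnergy x lam w ν := by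
  simp only [dpMeansEnergy_eq_sum_image]
  exact add_le_add_left (sum_le_sum fun b _ => sum_norm_sub_mean_sq_le _ x (ν b)) _

end Energy

theorem dpMeansObjective_eq_dpMeansEnergy {d n : ℕ} {β : Type} [Fintype β] [DecidableEq β]
    (x : Fin n → EuclideanSpace ℝ (Fin d)) (lam : ℝ) (w : Fin n → β) :
    dpMeansObjective x lam w = dpMeansEnergy x lam w (clusterCentroid x w) :=
  (dpMeansEnergy_eq_sum_image x lam w _).symm

section Reassignment

variable {ι κ E : Type*} [SeminormedAddCommGroup E]

/-- One reassignment pass from `z` to `z'` with centers `ν`: every point `i` either joins the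
cluster of some point `j` whose center is no farther than its current one, or opens the new
singleton cluster `Sum.inr i`, which is allowed when its current cost is at least `lam`. The chosen
center need not be a nearest one. -/
def IsDPMeansReassignment (x : ι → E) (lam : ℝ) (ν : κ → E) (z : ι → κ) (z' : ι → κ ⊕ ι) : Prop :=
  ∀ i, (∃ j, z' i = Sum.inl (z j) ∧ ‖x i - ν (z j)‖ ^ 2 ≤ ‖x i - ν (z i)‖ ^ 2) ∨
    (z' i = Sum.inr i ∧ lam ≤ ‖x i - ν (z i)‖ ^ 2)

namespace IsDPMeansReassignment

variable {x : ι → E} {lam : ℝ} {ν : κ → E} {z : ι → κ} {z' : ι → κ ⊕ ι}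

theorem of_nearest (hz : Function.Surjective z)
    (hz' : ∀ i,
      (∃ c, (∀ c', ‖x i - ν c‖ ^ 2 ≤ ‖x i - ν c'‖ ^ 2) ∧ z' i = Sum.inl c) ∨
      ((∀ c, lam < ‖x i - ν c‖ ^ 2) ∧ z' i = Sum.inr i)) :
    IsDPMeansReassignment x lam ν z z' := by
  intro i
  rcases hz' i with ⟨c, hnearest, hc⟩ | ⟨hfar, hi⟩
  · obtain ⟨j, rfl⟩ := hz c
    exact .inl ⟨j, hc, hnearest (z i)⟩
  · exact .inr ⟨hi, (hfar (z i)).le⟩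

variable [DecidableEq ι] [DecidableEq κ]

theorem norm_sub_sq_add_ite_le (h : IsDPMeansReassignment x lam ν z z') (i : ι) :
    ‖x i - Sum.elim ν x (z' i)‖ ^ 2 + (if z' i = Sum.inr i then lam else 0) ≤
      ‖x i - ν (z i)‖ ^ 2 := by
  rcases h i with ⟨j, hj, hle⟩ | ⟨hi, hle⟩
  · simpa [hj] using hle
  · simpa [hi] using hle

variable [Fintype ι]

theorem card_image_le (h : IsDPMeansReassignment x lam ν z z') :
    #(univ.image z') ≤ #(univ.image z) + #{i | z' i = Sum.inr i} := by
  rw [← card_disjSum]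
  refine card_le_card (image_subset_iff.mpr fun i _ => ?_)
  rcases h i with ⟨j, hj, -⟩ | ⟨hi, -⟩
  · rw [hj]
    exact inl_mem_disjSum.mpr (mem_image_of_mem z (mem_univ j))
  · rw [hi]
    exact inr_mem_disjSum.mpr (mem_filter.mpr ⟨mem_univ i, hi⟩)

theorem dpMeansEnergy_le (h : IsDPMeansReassignment x lam ν z z') (hlam : 0 ≤ lam) :
    dpMeansEnergy x lam z' (Sum.elim ν x) ≤ dpMeansEnergy x lam z ν := by
  have hcard : (#(univ.image z') : ℝ) ≤ #(univ.image z) + #{i | z' i = Sum.inr i} :=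
    mod_cast h.card_image_le
  have hcost : ∑ i, ‖x i - Sum.elim ν x (z' i)‖ ^ 2 + lam * #{i | z' i = Sum.inr i} ≤
      ∑ i, ‖x i - ν (z i)‖ ^ 2 := by
    calc _ = ∑ i, (‖x i - Sum.elim ν x (z' i)‖ ^ 2 + if z' i = Sum.inr i then lam else 0) := by
          rw [sum_add_distrib, ← sum_filter, sum_const, nsmul_eq_mul, mul_comm lam]
      _ ≤ _ := sum_le_sum fun i _ => h.norm_sub_sq_add_ite_le i
  calc dpMeansEnergy x lam z' (Sum.elim ν x)
      ≤ ∑ i, ‖x i - Sum.elim ν x (z' i)‖ ^ 2 +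
          lam * (#(univ.image z) + #{i | z' i = Sum.inr i}) := by
        unfold dpMeansEnergy
        gcongr
    _ = ∑ i, ‖x i - Sum.elim ν x (z' i)‖ ^ 2 + lam * #{i | z' i = Sum.inr i} +
          lam * #(univ.image z) := by ring
    _ ≤ dpMeansEnergy x lam z ν := by
        unfold dpMeansEnergy
        gcongr

end IsDPMeansReassignment

end Reassignment

theorem dpmeans_iteration_monotone_general {ι κ E : Type*} [Fintype ι] [DecidableEq ι]
    [DecidableEq κ] [SeminormedAddCommGroup E] [InnerProductSpace ℝ E] {x : ι → E} {lam : ℝ}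
    (hlam : 0 ≤ lam) {z : ι → κ} {z' : ι → κ ⊕ ι}
    (h : IsDPMeansReassignment x lam (clusterCentroid x z) z z') :
    dpMeansEnergy x lam z' (clusterCentroid x z') ≤
      dpMeansEnergy x lam z (clusterCentroid x z) :=
  (dpMeansEnergy_clusterCentroid_le x lam z' _).trans (h.dpMeansEnergy_le hlam)

/-- One DP-means reassignment pass does not increase the DP-means objective:
given a partition of `{1,…,n}` into `k` nonempty clusters (the fibers of the
surjective assignment `z`) with centroids `μ`, reassigning every point either to
a nearest centroid (when some centroid is within squared distance `λ`) or to a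
brand-new singleton cluster (otherwise) yields a partition whose objective is no
larger. -/
theorem dpmeans_iteration_monotone
    (d n k : ℕ)
    (x : Fin n → EuclideanSpace ℝ (Fin d))
    (lam : ℝ) (hlam : 0 ≤ lam)
    (z : Fin n → Fin k) (hz : Function.Surjective z)
    (μ : Fin k → EuclideanSpace ℝ (Fin d))
    (hμ : ∀ c, μ c = ((Finset.univ.filter (fun i => z i = c)).card : ℝ)⁻¹ •
        ∑ i ∈ Finset.univ.filter (fun i => z i = c), x i)
    (z' : Fin n → Fin k ⊕ Fin n)
    (hz' : ∀ i,
      (∃ c, ‖x i - μ c‖ ^ 2 ≤ lam ∧ (∀ c', ‖x i - μ c‖ ^ 2 ≤ ‖x i - μ c'‖ ^ 2) ∧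
          z' i = Sum.inl c) ∨
      ((∀ c, lam < ‖x i - μ c‖ ^ 2) ∧ z' i = Sum.inr i)) :
    dpMeansObjective x lam z' ≤ dpMeansObjective x lam z := by
  obtain rfl : μ = clusterCentroid x z := funext hμ
  simp only [dpMeansObjective_eq_dpMeansEnergy]
  exact dpmeans_iteration_monotone_general hlam <| IsDPMeansReassignment.of_nearest hz fun i =>
    (hz' i).imp_left fun ⟨c, _, hc⟩ => ⟨c, hc⟩
end

section
/- Let K be a real symmetric n×n matrix with eigenvalues β_1, …, β_n (listed with multiplicity), and let λ ∈ ℝ. Then for every k ∈ ℕ and every n×k real matrix Y satisfying Yᵀ Y = I_k, tr( Yᵀ (K − λ I) Y ) ≤ ∑_{i=1}^n max(β_i − λ, 0). (The upper-bound half of Theorem 5.2: no orthonormal matrix can exceed the value attained by thresholded eigenvectors in the relaxed DP-means objective.) -/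
open Finset Matrix

/-!
In the eigenbasis, the trace becomes `∑ i, (β i - λ) * w i`, where `w i` is the squared norm of
the `i`-th row of `Z = Uᴴ Y`. As `Z` is a contraction, so is `Zᴴ`, hence every weight `w i` lies
in `[0, 1]`, and each summand is at most `max (β i - λ) 0`.
-/

theorem posSemidef_one_sub_mul_conjTranspose_self {R ι k : Type*} [CommRing R] [NoZeroDivisors R]
    [PartialOrder R] [StarRing R] [StarOrderedRing R] [Fintype ι] [DecidableEq ι] [Fintype k]
    [DecidableEq k] {Z : Matrix ι k R} (hZ : (1 - Zᴴ * Z).PosSemidef) :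
    (1 - Z * Zᴴ).PosSemidef := by
  let _ : Invertible (1 : Matrix ι ι R) := invertibleOne
  let _ : Invertible (1 : Matrix k k R) := invertibleOne
  -- Both sides are Schur complements of the block matrix `[1, Z; Zᴴ, 1]`.
  have hblock : (fromBlocks 1 Z Zᴴ 1).PosSemidef :=
    (PosDef.fromBlocks₁₁ Z 1 PosDef.one).mpr (by simpa only [inv_one, Matrix.mul_one] using hZ)
  simpa only [inv_one, Matrix.mul_one] using (PosDef.fromBlocks₂₂ 1 Z PosDef.one).mp hblock

theorem mul_diagonal_mul_sub_smul_one {R m ι : Type*} [CommRing R] [DecidableEq m] [Fintype ι]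
    [DecidableEq ι] {U : Matrix m ι R} {V : Matrix ι m R} (hUV : U * V = 1) (d : ι → R) (c : R) :
    U * diagonal d * V - c • (1 : Matrix m m R) = U * diagonal (fun i => d i - c) * V := by
  rw [← diagonal_sub, ← smul_one_eq_diagonal, Matrix.mul_sub, Matrix.sub_mul, Matrix.mul_smul,
    Matrix.smul_mul, Matrix.mul_one, hUV]

section

open scoped ComplexOrder

variable {𝕜 m ι k : Type*} [RCLike 𝕜] [Fintype k]

theorem mul_conjTranspose_self_apply_self (Z : Matrix ι k 𝕜) (i : ι) :
    (Z * Zᴴ) i i = ((∑ j, ‖Z i j‖ ^ 2 : ℝ) : 𝕜) := by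
  simp only [mul_apply, conjTranspose_apply, RCLike.star_def, RCLike.mul_conj]
  norm_cast

variable [Fintype ι]

theorem sum_norm_sq_row_le_one [DecidableEq k] {Z : Matrix ι k 𝕜}
    (hZ : (1 - Zᴴ * Z).PosSemidef) (i : ι) : ∑ j, ‖Z i j‖ ^ 2 ≤ 1 := by
  classical
  have hdiag := (posSemidef_one_sub_mul_conjTranspose_self hZ).diag_nonneg (i := i)
  rw [Matrix.sub_apply, one_apply_eq, mul_conjTranspose_self_apply_self, sub_nonneg] at hdiag
  exact_mod_cast hdiag

variable [DecidableEq ι]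

theorem re_trace_conjTranspose_mul_diagonal_mul (d : ι → ℝ) (Z : Matrix ι k 𝕜) :
    RCLike.re (Zᴴ * diagonal (fun i => (d i : 𝕜)) * Z).trace = ∑ i, d i * ∑ j, ‖Z i j‖ ^ 2 := by
  rw [Matrix.mul_assoc, trace_mul_comm, Matrix.mul_assoc]
  simp only [trace, diag_apply, diagonal_mul, mul_conjTranspose_self_apply_self, map_sum,
    RCLike.re_ofReal_mul, RCLike.ofReal_re]

theorem re_trace_conjTranspose_mul_diagonal_mul_le [DecidableEq k] (d : ι → ℝ)
    {Z : Matrix ι k 𝕜} (hZ : (1 - Zᴴ * Z).PosSemidef) :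
    RCLike.re (Zᴴ * diagonal (fun i => (d i : 𝕜)) * Z).trace ≤ ∑ i, max (d i) 0 := by
  rw [re_trace_conjTranspose_mul_diagonal_mul]
  refine sum_le_sum fun i _ => ?_
  calc d i * ∑ j, ‖Z i j‖ ^ 2
      ≤ max (d i) 0 * ∑ j, ‖Z i j‖ ^ 2 := by gcongr; exact le_max_left _ _
    _ ≤ max (d i) 0 := mul_le_of_le_one_right (le_max_right _ _) (sum_norm_sq_row_le_one hZ i)

theorem relaxed_dpmeans_upper_bound_general [Fintype m] [DecidableEq m] [DecidableEq k]
    {K : Matrix m m 𝕜} {U : Matrix m ι 𝕜} (hU : U * Uᴴ = 1) (β : ι → ℝ)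
    (hKU : K = U * diagonal (fun i => (β i : 𝕜)) * Uᴴ) (lam : ℝ) {Y : Matrix m k 𝕜}
    (hY : (1 - Yᴴ * Y).PosSemidef) :
    RCLike.re (Yᴴ * (K - (lam : 𝕜) • (1 : Matrix m m 𝕜)) * Y).trace ≤ ∑ i, max (β i - lam) 0 := by
  have hZ : (1 - (Uᴴ * Y)ᴴ * (Uᴴ * Y)).PosSemidef := by
    rwa [conjTranspose_mul, conjTranspose_conjTranspose, Matrix.mul_assoc, ← Matrix.mul_assoc U,
      hU, Matrix.one_mul]
  have hconj : Yᴴ * (K - (lam : 𝕜) • (1 : Matrix m m 𝕜)) * Y =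
      (Uᴴ * Y)ᴴ * diagonal (fun i => ((β i - lam : ℝ) : 𝕜)) * (Uᴴ * Y) := by
    rw [hKU, mul_diagonal_mul_sub_smul_one hU, conjTranspose_mul, conjTranspose_conjTranspose]
    simp only [Matrix.mul_assoc, RCLike.ofReal_sub]
  rw [hconj]
  exact re_trace_conjTranspose_mul_diagonal_mul_le _ hZ

end

/-- Upper-bound half of Theorem 5.2: if `K` is a real symmetric `n × n` matrix
with eigenvalues `β 1, …, β n` (listed with multiplicity, i.e. `K = U D(β) Uᵀ`
for some orthogonal `U`), then for every `n × k` matrix `Y` with orthonormal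
columns, `tr (Yᵀ (K - λ I) Y) ≤ ∑ i, max (β i - λ) 0`. -/
theorem relaxed_dpmeans_upper_bound
    (n : ℕ) (K : Matrix (Fin n) (Fin n) ℝ) (hK : K.IsSymm)
    (β : Fin n → ℝ)
    (U : Matrix (Fin n) (Fin n) ℝ) (hU : Uᵀ * U = 1)
    (hKU : K = U * Matrix.diagonal β * Uᵀ)
    (lam : ℝ)
    (k : ℕ) (Y : Matrix (Fin n) (Fin k) ℝ) (hY : Yᵀ * Y = 1) :
    Matrix.trace (Yᵀ * (K - lam • (1 : Matrix (Fin n) (Fin n) ℝ)) * Y)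
      ≤ ∑ i, max (β i - lam) 0 :=
  relaxed_dpmeans_upper_bound_general (𝕜 := ℝ) (mul_eq_one_comm.mp hU) β hKU lam (Y := Y)
    (by simp only [conjTranspose_eq_transpose_of_trivial, hY, sub_self, PosSemidef.zero])
end

section
/- Let K be a real symmetric n×n matrix with eigenvalues β_1, …, β_n (listed with multiplicity), and let λ ∈ ℝ. Then there exist k ∈ ℕ and an n×k real matrix Y with Yᵀ Y = I_k such that tr( Yᵀ (K − λ I) Y ) = ∑_{i=1}^n max(β_i − λ, 0); in particular, one may take k to be the number of eigenvalues of K strictly greater than λ and the columns of Y to be orthonormal eigenvectors of K corresponding to those eigenvalues. (The attainment half of Theorem 5.2: the optimal relaxed cluster indicator matrix is obtained by stacking all eigenvectors of K whose eigenvalues exceed λ.) -/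
open Finset Matrix

/-!
Write `K U = U diag β` with `Uᵀ U = 1` and let `Y` consist of the columns `i` of `U` with `λ < β i`.
Since `Y` again has orthonormal columns which are eigenvectors, `Yᵀ (K - λ I) Y` is diagonal with
entries `β i - λ`, so its trace is the sum of the positive `β i - λ`.
-/

section

variable {k m n R : Type*}

theorem mul_eq_mul_diagonal_iff_forall_mulVec_col [Fintype m] [Fintype n] [DecidableEq n]
    [NonUnitalCommSemiring R] {A : Matrix m m R} {Y : Matrix m n R} {d : n → R} :
    A * Y = Y * diagonal d ↔ ∀ j, A *ᵥ Y.col j = d j • Y.col j := by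
  have entry (i : m) (j : n) :
      (A * Y) i j = (Y * diagonal d) i j ↔ (A *ᵥ Y.col j) i = (d j • Y.col j) i := by
    rw [mul_diagonal, mul_comm]
    exact Iff.rfl
  simp only [← Matrix.ext_iff, funext_iff, entry]
  exact forall_comm

theorem submatrix_mul_submatrix_eq_one [Fintype m] [DecidableEq n] [DecidableEq k]
    [NonAssocSemiring R] {V : Matrix n m R} {U : Matrix m n R} (hVU : V * U = 1)
    {e : k → n} (he : Function.Injective e) :
    V.submatrix e id * U.submatrix id e = 1 := by
  rw [← submatrix_mul _ _ _ _ _ Function.bijective_id, hVU, submatrix_one _ he]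

theorem mul_sub_smul_one_mul_eq_diagonal [Fintype m] [DecidableEq m] [Fintype n] [DecidableEq n]
    [CommRing R] {A : Matrix m m R} {V : Matrix n m R} {Y : Matrix m n R} {d : n → R}
    (hVY : V * Y = 1) (hAY : A * Y = Y * diagonal d) (c : R) :
    V * (A - c • (1 : Matrix m m R)) * Y = diagonal fun j => d j - c := by
  calc V * (A - c • (1 : Matrix m m R)) * Y
      = V * (A * Y) - c • (V * Y) := by
        simp only [Matrix.mul_assoc, Matrix.sub_mul, Matrix.mul_sub, Matrix.smul_mul,
          Matrix.mul_smul, Matrix.one_mul]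
    _ = diagonal d - c • 1 := by rw [hAY, ← Matrix.mul_assoc, hVY, Matrix.one_mul]
    _ = diagonal fun j => d j - c := by rw [smul_one_eq_diagonal, diagonal_sub]

end

theorem sum_max_zero_eq_sum_filter_pos {ι M : Type*} [AddCommMonoid M] [LinearOrder M]
    (s : Finset ι) (f : ι → M) :
    ∑ i ∈ s, max (f i) 0 = ∑ i ∈ s with 0 < f i, f i := by
  simp only [sum_filter, max_comm (f _), max_def_lt]

theorem sum_equivFin_symm {ι M : Type*} [AddCommMonoid M] (s : Finset ι) (f : ι → M) :
    ∑ j, f (s.equivFin.symm j) = ∑ i ∈ s, f i :=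
  (s.equivFin.symm.sum_comp fun i : s => f i).trans (sum_coe_sort s f)

theorem relaxed_dpmeans_attained_general {m n R : Type*} [Fintype m] [DecidableEq m]
    [Fintype n] [DecidableEq n] [CommRing R] [LinearOrder R] [IsOrderedAddMonoid R]
    {K : Matrix m m R} {β : n → R} {U : Matrix m n R} (hU : Uᵀ * U = 1)
    (hKU : ∀ i, K *ᵥ U.col i = β i • U.col i) (lam : R) :
    ∃ Y : Matrix m (Fin #{i | lam < β i}) R,
      Yᵀ * Y = 1 ∧
      (∀ j, ∃ i, lam < β i ∧ K *ᵥ Y.col j = β i • Y.col j) ∧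
      trace (Yᵀ * (K - lam • (1 : Matrix m m R)) * Y) = ∑ i, max (β i - lam) 0 := by
  let S : Finset n := {i | lam < β i}
  let e (j : Fin #S) : n := S.equivFin.symm j
  let Y := U.submatrix id e
  have he : Function.Injective e := Subtype.val_injective.comp S.equivFin.symm.injective
  have hlam (j : Fin #S) : lam < β (e j) := (mem_filter.mp (S.equivFin.symm j).2).2
  have hYY : Yᵀ * Y = 1 := submatrix_mul_submatrix_eq_one hU he
  have hKY (j : Fin #S) : K *ᵥ Y.col j = β (e j) • Y.col j := hKU (e j)
  refine ⟨Y, hYY, fun j => ⟨e j, hlam j, hKY j⟩, ?_⟩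
  calc trace (Yᵀ * (K - lam • (1 : Matrix m m R)) * Y)
      = ∑ j, (β (e j) - lam) := by
        rw [mul_sub_smul_one_mul_eq_diagonal hYY
          (mul_eq_mul_diagonal_iff_forall_mulVec_col.mpr hKY), trace_diagonal]
    _ = ∑ i ∈ S, (β i - lam) := sum_equivFin_symm S fun i => β i - lam
    _ = ∑ i, max (β i - lam) 0 := by simp only [sum_max_zero_eq_sum_filter_pos, sub_pos, S]

/-- Attainment half of Theorem 5.2: if `K` is a real symmetric `n × n` matrix
with eigenvalues `β 1, …, β n` (listed with multiplicity, i.e. `K = U D(β) Uᵀ`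
for some orthogonal `U`), then taking `k` to be the number of eigenvalues
strictly greater than `λ`, there is an `n × k` matrix `Y` with orthonormal
columns, each column an eigenvector of `K` for an eigenvalue exceeding `λ`,
achieving `tr (Yᵀ (K - λ I) Y) = ∑ i, max (β i - λ) 0`. -/
theorem relaxed_dpmeans_attained
    (n : ℕ) (K : Matrix (Fin n) (Fin n) ℝ) (hK : K.IsSymm)
    (β : Fin n → ℝ)
    (U : Matrix (Fin n) (Fin n) ℝ) (hU : Uᵀ * U = 1)
    (hKU : K = U * Matrix.diagonal β * Uᵀ)
    (lam : ℝ) :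
    ∃ Y : Matrix (Fin n) (Fin ((Finset.univ.filter (fun i => lam < β i)).card)) ℝ,
      Yᵀ * Y = 1 ∧
      (∀ j, ∃ i, lam < β i ∧
        K.mulVec (fun r => Y r j) = β i • (fun r => Y r j)) ∧
      Matrix.trace (Yᵀ * (K - lam • (1 : Matrix (Fin n) (Fin n) ℝ)) * Y)
        = ∑ i, max (β i - lam) 0 :=
  relaxed_dpmeans_attained_general hU (mul_eq_mul_diagonal_iff_forall_mulVec_col.mp <| by
    rw [hKU, Matrix.mul_assoc, hU, Matrix.mul_one]) lam
end

section
/- Let A be a symmetric n×n real matrix with nonnegative entries (the adjacency matrix of a graph on vertex set V = {1,…,n}), assume each degree d_i = ∑_j A_{ij} is strictly positive, let D = diag(d_1,…,d_n), let σ ∈ ℝ, and set K = σ D^{−1} + D^{−1} A D^{−1} and weights w_i = d_i. For any partition {V_1, …, V_k} of V into k nonempty clusters, define the weighted kernel k-means objective J(K, W) = ∑_{c=1}^k [ ∑_{i ∈ V_c} d_i K_{ii} − ( ∑_{i ∈ V_c} ∑_{j ∈ V_c} d_i d_j K_{ij} ) / ( ∑_{i ∈ V_c} d_i ) ] and the k-way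 normalized cut Cut(A) = ∑_{c=1}^k ( ∑_{i ∈ V_c} ∑_{j ∉ V_c} A_{ij} ) / ( ∑_{i ∈ V_c} d_i ). Then J(K, W) = σ n + tr( D^{−1/2} A D^{−1/2} ) − (σ + 1) k + Cut(A). (Theorem 5.3, the identity relating weighted kernel k-means and normalized cut.) -/
open Finset Matrix

/-!
Conjugating `K = σ D⁻¹ + D⁻¹ A D⁻¹` by `D` gives `σ D + A`, so the within-cluster term of the
k-means objective is `(σ deg(V_c) + links(V_c, V_c)) / deg(V_c)`. Since
`links(V_c, V_c) = deg(V_c) - links(V_c, V ∖ V_c)`, this is `σ + 1` minus the contribution of `V_c`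
to the normalized cut. The diagonal terms do not depend on the clustering and add up to
`σ n + tr (D⁻¹ A)`.
-/

section Definitions

variable {ι κ R : Type*}

/-- The total weight of the edges from `s` to `t`, where `A` is a weighted adjacency matrix. -/
def links [AddCommMonoid R] (A : Matrix ι ι R) (s t : Finset ι) : R :=
  ∑ i ∈ s, ∑ j ∈ t, A i j

/-- The degree of a vertex of the graph with weighted adjacency matrix `A`; for a directed graph
this is the out-degree. -/
def weightedDegree [Fintype ι] [AddCommMonoid R] (A : Matrix ι ι R) (i : ι) : R :=
  ∑ j, A i j

/-- The cluster with label `c` of the clustering encoded by the labelling `z`. -/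
def cluster [Fintype ι] [DecidableEq κ] (z : ι → κ) (c : κ) : Finset ι :=
  univ.filter fun i => z i = c

/-- The kernel matrix `σ W⁻¹ + W⁻¹ A W⁻¹` with `W = diag w`, for which weighted kernel k-means
minimizes the normalized cut when `w` is the degree. -/
def graphKernel [Fintype ι] [DecidableEq ι] [Field R] (σ : R) (w : ι → R) (A : Matrix ι ι R) :
    Matrix ι ι R :=
  σ • diagonal (fun i => (w i)⁻¹) + diagonal (fun i => (w i)⁻¹) * A * diagonal (fun i => (w i)⁻¹)

/-- The weighted kernel k-means objective `J(K, diag w)` of the clustering `z`, with the distances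
to the cluster means expanded in terms of the kernel. -/
def weightedKernelKMeans [Fintype ι] [Fintype κ] [DecidableEq κ] [Field R]
    (K : Matrix ι ι R) (w : ι → R) (z : ι → κ) : R :=
  ∑ c, ((∑ i ∈ cluster z c, w i * K i i)
    - (∑ i ∈ cluster z c, ∑ j ∈ cluster z c, w i * w j * K i j) / ∑ i ∈ cluster z c, w i)

/-- The normalized cut of the clustering `z`. A cluster of total degree zero contributes `0`, by
the convention `x / 0 = 0`. -/
def normalizedCut [Fintype ι] [DecidableEq ι] [Fintype κ] [DecidableEq κ] [Field R]
    (A : Matrix ι ι R) (z : ι → κ) : R :=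
  ∑ c, links A (cluster z c) (cluster z c)ᶜ / ∑ i ∈ cluster z c, weightedDegree A i

end Definitions

section Kernel

variable {ι R : Type*} [Fintype ι] [DecidableEq ι] [Field R] {w : ι → R}

theorem mul_mul_graphKernel_apply (σ : R) (A : Matrix ι ι R) {i j : ι}
    (hi : w i ≠ 0) (hj : w j ≠ 0) :
    w i * w j * graphKernel σ w A i j = σ * diagonal w i j + A i j := by
  rw [graphKernel, Matrix.add_apply, Matrix.smul_apply, mul_diagonal, diagonal_mul, smul_eq_mul]
  obtain rfl | hij := eq_or_ne i j
  · simp only [diagonal_apply_eq]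
    field_simp
  · simp only [diagonal_apply_ne _ hij, mul_zero, zero_add]
    field_simp

theorem mul_graphKernel_apply_self (σ : R) (A : Matrix ι ι R) {i : ι} (hi : w i ≠ 0) :
    w i * graphKernel σ w A i i = σ + A i i / w i := by
  apply mul_left_cancel₀ hi
  rw [← mul_assoc, mul_mul_graphKernel_apply σ A hi hi, diagonal_apply_eq]
  field_simp

theorem sum_sum_mul_mul_graphKernel (σ : R) (A : Matrix ι ι R) {s : Finset ι}
    (hw : ∀ i ∈ s, w i ≠ 0) :
    ∑ i ∈ s, ∑ j ∈ s, w i * w j * graphKernel σ w A i j = σ * ∑ i ∈ s, w i + links A s s := by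
  rw [links, mul_sum, ← sum_add_distrib]
  refine sum_congr rfl fun i hi => ?_
  calc ∑ j ∈ s, w i * w j * graphKernel σ w A i j
      = ∑ j ∈ s, (σ * diagonal w i j + A i j) :=
        sum_congr rfl fun j hj => mul_mul_graphKernel_apply σ A (hw i hi) (hw j hj)
    _ = σ * w i + ∑ j ∈ s, A i j := by
        rw [sum_add_distrib, ← mul_sum]
        simp only [diagonal_apply, sum_ite_eq, if_pos hi]

end Kernel

theorem links_add_links_compl {ι R : Type*} [Fintype ι] [DecidableEq ι] [AddCommMonoid R]
    (A : Matrix ι ι R) (s t : Finset ι) :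
    links A s t + links A s tᶜ = ∑ i ∈ s, weightedDegree A i := by
  simp only [links, weightedDegree, ← sum_add_distrib, sum_add_sum_compl]

theorem trace_diagonal_inv_sqrt_mul_mul {ι : Type*} [Fintype ι] [DecidableEq ι]
    (A : Matrix ι ι ℝ) {w : ι → ℝ} (hw : ∀ i, 0 ≤ w i) :
    trace (diagonal (fun i => (√(w i))⁻¹) * A * diagonal (fun i => (√(w i))⁻¹))
      = ∑ i, A i i / w i := by
  refine sum_congr rfl fun i _ => ?_
  rw [diag_apply, mul_diagonal, diagonal_mul, mul_right_comm, ← mul_inv, Real.mul_self_sqrt (hw i),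
    inv_mul_eq_div]

section Clustering

variable {ι κ R : Type*} [Fintype ι] [DecidableEq ι] [Fintype κ] [DecidableEq κ]

theorem sum_sum_mul_mul_graphKernel_div [Field R] (σ : R) {A : Matrix ι ι R} {s : Finset ι}
    (hdeg : ∀ i ∈ s, weightedDegree A i ≠ 0) (hvol : ∑ i ∈ s, weightedDegree A i ≠ 0) :
    (∑ i ∈ s, ∑ j ∈ s, weightedDegree A i * weightedDegree A j
        * graphKernel σ (weightedDegree A) A i j) / ∑ i ∈ s, weightedDegree A i
      = σ + 1 - links A s sᶜ / ∑ i ∈ s, weightedDegree A i := by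
  rw [sum_sum_mul_mul_graphKernel σ A hdeg, eq_sub_of_add_eq (links_add_links_compl A s s)]
  field_simp
  ring

theorem weightedKernelKMeans_graphKernel_eq [Field R] (σ : R) {A : Matrix ι ι R} {z : ι → κ}
    (hdeg : ∀ i, weightedDegree A i ≠ 0)
    (hvol : ∀ c, ∑ i ∈ cluster z c, weightedDegree A i ≠ 0) :
    weightedKernelKMeans (graphKernel σ (weightedDegree A) A) (weightedDegree A) z
      = σ * Fintype.card ι + ∑ i, A i i / weightedDegree A i - (σ + 1) * Fintype.card κ
        + normalizedCut A z := by
  have sum_diag : ∑ c, ∑ i ∈ cluster z c, (σ + A i i / weightedDegree A i)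
      = σ * Fintype.card ι + ∑ i, A i i / weightedDegree A i := by
    unfold cluster
    rw [sum_fiberwise, sum_add_distrib, sum_const, card_univ, nsmul_eq_mul, mul_comm]
  have sum_within : ∑ c, (σ + 1 - links A (cluster z c) (cluster z c)ᶜ
        / ∑ i ∈ cluster z c, weightedDegree A i)
      = (σ + 1) * Fintype.card κ - normalizedCut A z := by
    rw [sum_sub_distrib, sum_const, card_univ, nsmul_eq_mul, mul_comm, normalizedCut]
  simp only [weightedKernelKMeans, mul_graphKernel_apply_self σ A (hdeg _),
    sum_sum_mul_mul_graphKernel_div σ (fun i _ => hdeg i) (hvol _)]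
  rw [sum_sub_distrib, sum_diag, sum_within, sub_sub_eq_add_sub, add_sub_right_comm]

theorem weighted_kernel_kmeans_eq_normalized_cut_general (σ : ℝ) {A : Matrix ι ι ℝ} {z : ι → κ}
    (hdeg : ∀ i, 0 < weightedDegree A i) (hz : Function.Surjective z) :
    weightedKernelKMeans (graphKernel σ (weightedDegree A) A) (weightedDegree A) z
      = σ * Fintype.card ι
        + trace (diagonal (fun i => (√(weightedDegree A i))⁻¹) * A
            * diagonal (fun i => (√(weightedDegree A i))⁻¹))
        - (σ + 1) * Fintype.card κ + normalizedCut A z := by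
  have cluster_nonempty (c : κ) : (cluster z c).Nonempty :=
    (hz c).imp fun i hi => mem_filter.2 ⟨mem_univ i, hi⟩
  rw [trace_diagonal_inv_sqrt_mul_mul A fun i => (hdeg i).le]
  exact weightedKernelKMeans_graphKernel_eq σ (fun i => (hdeg i).ne') fun c =>
    (sum_pos (fun i _ => hdeg i) (cluster_nonempty c)).ne'

end Clustering

/-- Theorem 5.3: for a graph with symmetric nonnegative adjacency matrix `A`
and positive degrees, setting `K = σ D⁻¹ + D⁻¹ A D⁻¹` and weights `w i = d i`,
the weighted kernel k-means objective of any clustering into `k` nonempty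
clusters (the fibers of the surjective map `z`) equals
`σ n + tr (D^{-1/2} A D^{-1/2}) - (σ + 1) k + Cut(A)`, where `Cut(A)` is the
k-way normalized cut. -/
theorem weighted_kernel_kmeans_eq_normalized_cut
    (n k : ℕ)
    (A : Matrix (Fin n) (Fin n) ℝ) (hA : A.IsSymm)
    (hApos : ∀ i j, 0 ≤ A i j)
    (deg : Fin n → ℝ) (hdeg : ∀ i, deg i = ∑ j, A i j)
    (hdegpos : ∀ i, 0 < deg i)
    (σ : ℝ)
    (K : Matrix (Fin n) (Fin n) ℝ)
    (hK : K = σ • Matrix.diagonal (fun i => (deg i)⁻¹)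
        + Matrix.diagonal (fun i => (deg i)⁻¹) * A * Matrix.diagonal (fun i => (deg i)⁻¹))
    (z : Fin n → Fin k) (hz : Function.Surjective z) :
    (∑ c, ((∑ i ∈ Finset.univ.filter (fun i => z i = c), deg i * K i i)
        - (∑ i ∈ Finset.univ.filter (fun i => z i = c),
            ∑ j ∈ Finset.univ.filter (fun j => z j = c), deg i * deg j * K i j)
          / (∑ i ∈ Finset.univ.filter (fun i => z i = c), deg i)))
    = σ * (n : ℝ)
      + Matrix.trace (Matrix.diagonal (fun i => (Real.sqrt (deg i))⁻¹) * A
          * Matrix.diagonal (fun i => (Real.sqrt (deg i))⁻¹))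
      - (σ + 1) * (k : ℝ)
      + ∑ c, (∑ i ∈ Finset.univ.filter (fun i => z i = c),
            ∑ j ∈ Finset.univ.filter (fun j => z j ≠ c), A i j)
          / (∑ i ∈ Finset.univ.filter (fun i => z i = c), deg i) := by
  obtain rfl : deg = weightedDegree A := funext hdeg
  simpa only [hK, weightedKernelKMeans, graphKernel, normalizedCut, links, cluster, compl_filter,
    Fintype.card_fin] using weighted_kernel_kmeans_eq_normalized_cut_general σ hdegpos hz
end

section
/- Let k ≥ 1, let d_1, …, d_k ≥ 0 and n_1, …, n_k > 0 be real numbers, let λ > 0, ρ > 0, and fix x ∈ ℝ^d. For σ > 0 define γ̂_new(σ) = exp( −λ/(2σ) − ‖x‖²/(2(ρ+σ)) ) / [ exp( −λ/(2σ) − ‖x‖²/(2(ρ+σ)) ) + ∑_{j=1}^k n_j exp( −d_j/(2σ) ) ]. If λ < min_{1 ≤ c ≤ k} d_c, then γ̂_new(σ) → 1 as σ → 0⁺. (Asymptotics of the DP-mixture Gibbs sampler: when the threshold λ is strictly smaller than every squared distance d_c = ‖x − μ_c‖², the probability of starting a new cluster tends to one.) -/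
open Filter Topology

/-!
Divide numerator and denominator by the new-cluster weight. The existing cluster `j` then
contributes `nc j * exp (-(dc j - lam) / (2 * σ) + ‖x‖ ^ 2 / (2 * (ρ + σ)))`. The first term of the
exponent tends to `-∞` at the rate `σ⁻¹`, while the second stays bounded as `σ → 0⁺`; any
perturbation that is `o(σ⁻¹)` would be just as harmless.
-/

open Asymptotics

section LittleO

variable {α : Type*} {l : Filter α}

lemma tendsto_div_self_add_of_isLittleO {𝕜 : Type*} [NormedField 𝕜] {f g : α → 𝕜}
    (hgf : g =o[l] f) (hf : ∀ᶠ t in l, f t ≠ 0) :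
    Tendsto (fun t => f t / (f t + g t)) l (𝓝 1) := by
  have h_equiv : (f + g) ~[l] f := IsEquivalent.refl.add_isLittleO hgf
  have h_ratio : Tendsto ((f + g) / f) l (𝓝 1) := (isEquivalent_iff_tendsto_one hf).1 h_equiv
  simpa only [Pi.div_apply, Pi.add_apply, inv_div, inv_one] using h_ratio.inv₀ one_ne_zero

lemma tendsto_const_mul_sub_atTop_of_isLittleO {u r : α → ℝ} {c : ℝ} (hc : 0 < c)
    (hu : Tendsto u l atTop) (hr : r =o[l] u) :
    Tendsto (fun t => c * u t - r t) l atTop := by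
  have h_equiv : (fun t => c * u t - r t) ~[l] fun t => c * u t :=
    IsEquivalent.refl.sub_isLittleO (hr.const_mul_right hc.ne')
  exact h_equiv.symm.tendsto_atTop (hu.const_mul_atTop hc)

lemma isLittleO_exp_neg_mul_exp_neg_mul_sub {u r : α → ℝ} {a b : ℝ} (hab : a < b)
    (hu : Tendsto u l atTop) (hr : r =o[l] u) :
    (fun t => Real.exp (-b * u t)) =o[l] fun t => Real.exp (-a * u t - r t) := by
  rw [Real.isLittleO_exp_comp_exp_comp]
  convert tendsto_const_mul_sub_atTop_of_isLittleO (sub_pos.2 hab) hu hr using 2 with t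
  ring

end LittleO

lemma isLittleO_inv_nhdsGT_zero_of_continuousAt {r : ℝ → ℝ} (hr : ContinuousAt r 0) :
    r =o[𝓝[>] 0] fun σ => σ⁻¹ := by
  have h_bounded : r =O[𝓝[>] 0] fun _ => (1 : ℝ) :=
    (hr.tendsto.mono_left nhdsWithin_le_nhds).isBigO_one ℝ
  exact h_bounded.trans_isLittleO
    ((isLittleO_const_left_of_ne one_ne_zero).2
      (tendsto_norm_atTop_atTop.comp tendsto_inv_nhdsGT_zero))

theorem gibbs_new_cluster_prob_tendsto_one_general {ι : Type*} [Fintype ι]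
    {lam : ℝ} {d : ι → ℝ} (hlt : ∀ i, lam < d i) (n : ι → ℝ)
    {r : ℝ → ℝ} (hr : r =o[𝓝[>] 0] fun σ => σ⁻¹) :
    Tendsto
      (fun σ : ℝ =>
        Real.exp (-lam / (2 * σ) - r σ) /
          (Real.exp (-lam / (2 * σ) - r σ) + ∑ i, n i * Real.exp (-d i / (2 * σ))))
      (𝓝[>] 0) (𝓝 1) := by
  have h_term (i : ι) : (fun σ => n i * Real.exp (-d i / (2 * σ))) =o[𝓝[>] 0]
      fun σ => Real.exp (-lam / (2 * σ) - r σ) := by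
    have h_exp := isLittleO_exp_neg_mul_exp_neg_mul_sub
      (div_lt_div_of_pos_right (hlt i) two_pos) tendsto_inv_nhdsGT_zero hr
    simpa only [div_mul_eq_div_div, neg_div, neg_mul, div_eq_mul_inv, mul_inv, mul_assoc]
      using h_exp.const_mul_left (n i)
  exact tendsto_div_self_add_of_isLittleO (IsLittleO.fun_sum fun i _ => h_term i)
    (.of_forall fun _ => Real.exp_ne_zero _)

/-- Asymptotics of the DP-mixture Gibbs sampler: if the threshold `λ` is
strictly smaller than every squared distance `dc c` to an existing cluster
mean, the Gibbs probability of starting a new cluster tends to one as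
`σ → 0⁺`. -/
theorem gibbs_new_cluster_prob_tendsto_one
    (dim k : ℕ) (hk : 1 ≤ k)
    (dc : Fin k → ℝ) (hdc : ∀ c, 0 ≤ dc c)
    (nc : Fin k → ℝ) (hnc : ∀ c, 0 < nc c)
    (lam ρ : ℝ) (hlam : 0 < lam) (hρ : 0 < ρ)
    (x : EuclideanSpace ℝ (Fin dim))
    (hlt : ∀ c, lam < dc c) :
    Filter.Tendsto
      (fun σ : ℝ =>
        Real.exp (-lam / (2 * σ) - ‖x‖ ^ 2 / (2 * (ρ + σ))) /
          (Real.exp (-lam / (2 * σ) - ‖x‖ ^ 2 / (2 * (ρ + σ)))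
            + ∑ j, nc j * Real.exp (-dc j / (2 * σ))))
      (nhdsWithin 0 (Set.Ioi 0)) (nhds 1) := by
  refine gibbs_new_cluster_prob_tendsto_one_general hlt nc
    (isLittleO_inv_nhdsGT_zero_of_continuousAt (.div₀ (by fun_prop) (by fun_prop) ?_))
  simpa only [add_zero] using mul_ne_zero two_ne_zero hρ.ne'
end

section
/- Let k ≥ 1, let d_1, …, d_k ≥ 0 and n_1, …, n_k > 0 be real numbers, let λ > 0, ρ > 0, and fix x ∈ ℝ^d. For σ > 0 and 1 ≤ c ≤ k define γ̂_c(σ) = n_c exp( −d_c/(2σ) ) / [ exp( −λ/(2σ) − ‖x‖²/(2(ρ+σ)) ) + ∑_{j=1}^k n_j exp( −d_j/(2σ) ) ]. If there is an index c* with d_{c*} < λ and d_{c*} < d_c for all c ≠ c*, then γ̂_{c*}(σ) → 1 as σ → 0⁺. (Asymptotics of the DP-mixture Gibbs sampler: when some existing cluster is strictly closest and closer than the threshold λ, the assignment probabilities become binary and concentrate on that cluster, yielding the hard reassignment rule of DP-means.) -/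
open Filter Topology

/-!
Compare every summand of the denominator with the weight of the nearest cluster. Each of the
others, including the one for opening a new cluster, has a strictly larger energy, so its ratio to
that weight is an exponential whose exponent tends to `-∞` as the temperature `2σ` tends to zero.
The Gaussian marginal only subtracts from the new-cluster exponent a term that is bounded below,
so the energy gap still wins. The denominator is therefore asymptotic to the numerator.
-/

open Asymptotics

theorem isEquivalent_sum_of_isLittleO {ι α E : Type*} [NormedAddCommGroup E] {l : Filter α}
    {s : Finset ι} {f : ι → α → E} {c : ι} (hc : c ∈ s)
    (h : ∀ j ∈ s, j ≠ c → f j =o[l] f c) :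
    (fun t => ∑ j ∈ s, f j t) ~[l] f c := by
  classical
  have hrest : (fun t => ∑ j ∈ s.erase c, f j t) =o[l] f c :=
    IsLittleO.fun_sum fun j hj =>
      h j (Finset.mem_of_mem_erase hj) (Finset.ne_of_mem_erase hj)
  refine (IsEquivalent.refl.add_isLittleO hrest).congr_left ?_
  exact .of_forall fun t => Finset.add_sum_erase s (f · t) hc

section LowTemperature

variable {α : Type*} {l : Filter α} {τ r : α → ℝ} {a b : ℝ}

theorem isLittleO_exp_neg_div_sub (hτ : Tendsto τ l (𝓝[>] 0))
    (hr : IsBoundedUnder (· ≥ ·) l r) (hab : a < b) :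
    (fun t => Real.exp (-b / τ t - r t)) =o[l] fun t => Real.exp (-a / τ t) := by
  rw [Real.isLittleO_exp_comp_exp_comp]
  obtain ⟨C, hC⟩ := hr.eventually_ge
  have hgap : Tendsto (fun t => (b - a) * (τ t)⁻¹) l atTop :=
    hτ.inv_tendsto_nhdsGT_zero.const_mul_atTop (sub_pos.2 hab)
  refine (tendsto_atTop_add_right_of_le' l C hgap hC).congr fun t => ?_
  ring

theorem isLittleO_exp_neg_div (hτ : Tendsto τ l (𝓝[>] 0)) (hab : a < b) :
    (fun t => Real.exp (-b / τ t)) =o[l] fun t => Real.exp (-a / τ t) := by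
  simpa only [sub_zero] using
    isLittleO_exp_neg_div_sub hτ (isBoundedUnder_const (a := (0 : ℝ))) hab

theorem isEquivalent_sum_mul_exp_neg_div {ι : Type*} {s : Finset ι} {d n : ι → ℝ} {c : ι}
    (hτ : Tendsto τ l (𝓝[>] 0)) (hc : c ∈ s) (hn : n c ≠ 0)
    (hmin : ∀ j ∈ s, j ≠ c → d c < d j) :
    (fun t => ∑ j ∈ s, n j * Real.exp (-d j / τ t)) ~[l]
      fun t => n c * Real.exp (-d c / τ t) :=
  isEquivalent_sum_of_isLittleO (f := fun j t => n j * Real.exp (-d j / τ t)) hc fun j hj hjc =>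
    ((isLittleO_exp_neg_div hτ (hmin j hj hjc)).const_mul_left (n j)).const_mul_right hn

theorem gibbs_existing_cluster_prob_tendsto_one_general {ι : Type*} {s : Finset ι}
    {d n : ι → ℝ} {c : ι} {lam : ℝ} (hτ : Tendsto τ l (𝓝[>] 0))
    (hr : IsBoundedUnder (· ≥ ·) l r) (hc : c ∈ s) (hn : n c ≠ 0) (hlam : d c < lam)
    (hmin : ∀ j ∈ s, j ≠ c → d c < d j) :
    Tendsto (fun t => n c * Real.exp (-d c / τ t) /
      (Real.exp (-lam / τ t - r t) + ∑ j ∈ s, n j * Real.exp (-d j / τ t))) l (𝓝 1) := by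
  have hnew : (fun t => Real.exp (-lam / τ t - r t)) =o[l]
      fun t => n c * Real.exp (-d c / τ t) :=
    (isLittleO_exp_neg_div_sub hτ hr hlam).const_mul_right hn
  have hden := hnew.add_isEquivalent (isEquivalent_sum_mul_exp_neg_div hτ hc hn hmin)
  have hne : ∀ t, n c * Real.exp (-d c / τ t) ≠ 0 := fun t => mul_ne_zero hn (Real.exp_ne_zero _)
  have hratio := (isEquivalent_iff_tendsto_one (.of_forall hne)).1 hden
  simpa only [Pi.div_apply, Pi.add_apply, Pi.inv_apply, inv_div, inv_one] using
    hratio.inv₀ one_ne_zero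

end LowTemperature

/-- Asymptotics of the DP-mixture Gibbs sampler: if some existing cluster `c*`
is strictly closest (`dc c* < dc c` for all `c ≠ c*`) and closer than the
threshold (`dc c* < λ`), the Gibbs probability of assigning the point to `c*`
tends to one as `σ → 0⁺`. -/
theorem gibbs_existing_cluster_prob_tendsto_one
    (dim k : ℕ) (hk : 1 ≤ k)
    (dc : Fin k → ℝ) (hdc : ∀ c, 0 ≤ dc c)
    (nc : Fin k → ℝ) (hnc : ∀ c, 0 < nc c)
    (lam ρ : ℝ) (hlam : 0 < lam) (hρ : 0 < ρ)
    (x : EuclideanSpace ℝ (Fin dim))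
    (cstar : Fin k) (hcl : dc cstar < lam)
    (hmin : ∀ c, c ≠ cstar → dc cstar < dc c) :
    Filter.Tendsto
      (fun σ : ℝ =>
        nc cstar * Real.exp (-dc cstar / (2 * σ)) /
          (Real.exp (-lam / (2 * σ) - ‖x‖ ^ 2 / (2 * (ρ + σ)))
            + ∑ j, nc j * Real.exp (-dc j / (2 * σ))))
      (nhdsWithin 0 (Set.Ioi 0)) (nhds 1) := by
  have hτ : Tendsto (fun σ : ℝ => 2 * σ) (𝓝[>] 0) (𝓝[>] 0) :=
    tendsto_iff_comap.2 (comap_mulLeft_nhdsGT_zero two_pos).ge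
  have hr : IsBoundedUnder (· ≥ ·) (𝓝[>] 0) fun σ => ‖x‖ ^ 2 / (2 * (ρ + σ)) := by
    refine isBoundedUnder_of_eventually_ge (a := 0) ?_
    filter_upwards [self_mem_nhdsWithin] with σ (hσ : 0 < σ)
    positivity
  exact gibbs_existing_cluster_prob_tendsto_one_general hτ hr (Finset.mem_univ _)
    (hnc cstar).ne' hcl fun j _ => hmin j
end
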